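/- Let γ be a T-periodic solution of the Hamiltonian system ẋ = J∇Γ(x) and let S be a 2n×2n real orthogonal matrix with SJ = −JS, Γ(Sx) = Γ(x) for all x, and γ(−s + T/N) = S γ(s) for all s, for some N ∈ ℕ, N ≥ 1. Then the fundamental matrix solution X of the linearization along γ satisfies X(T/N) = S A⁻¹ Sᵀ A, where A = X(T/(2N)). -/

import Mathlib

open Matrix

/-- The standard `2n × 2n` symplectic matrix `J = [[0, I],[−I, 0]]`, with the index set
`Fin n ⊕ Fin n` (first summand: configuration coordinates, second: momenta). -/
def stdJ (n : ℕ) : Matrix (Fin n ⊕ Fin n) (Fin n ⊕ Fin n) ℝ :=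
  Matrix.fromBlocks 0 1 (-1) 0

/-- The gradient of `f : ℝ^ι → ℝ` at `x`, componentwise via the Fréchet derivative. -/
noncomputable def gradV {ι : Type} [Fintype ι] [DecidableEq ι]
    (f : (ι → ℝ) → ℝ) (x : ι → ℝ) : ι → ℝ :=
  fun i => fderiv ℝ f x (Pi.single i 1)

/-- The Hessian matrix `D²f(x)` of `f : ℝ^ι → ℝ` at `x`. -/
noncomputable def hessM {ι : Type} [Fintype ι] [DecidableEq ι]
    (f : (ι → ℝ) → ℝ) (x : ι → ℝ) : Matrix ι ι ℝ :=
  Matrix.of fun i j => fderiv ℝ (fun y => fderiv ℝ f y (Pi.single j 1)) x (Pi.single i 1)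

/-!
Let `X` solve the linear Hamiltonian system `X' = J H X` with `X(0) = 1`, where `H(s) = D²Γ(γ(s))`.
Differentiating `Γ(Sx) = Γ(x)` twice along `γ` gives `Sᵀ H(τ - s) S = H(s)` with `τ = T / N`. Hence
`s ↦ S⁻¹ X(τ - s)` solves the same system: reversing time and applying the anti-symplectic `S` each
change the sign of the vector field. Every solution `V` equals `X V(0)`, so
`S⁻¹ X(τ - s) = X(s) S⁻¹ X(τ)`, and the midpoint `s = τ / 2` is the claim.

Uniqueness of solutions is read off from the Wronskian `Uᵀ J⁻¹ V`, which is constant because `J` is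
skew and `H` symmetric.
-/

open scoped Topology

section Hessian

theorem fderiv_fderiv_comp_continuousLinearMap {𝕜 E F G : Type*} [NontriviallyNormedField 𝕜]
    [NormedAddCommGroup E] [NormedSpace 𝕜 E] [NormedAddCommGroup F] [NormedSpace 𝕜 F]
    [NormedAddCommGroup G] [NormedSpace 𝕜 G] {f : F → G} (L : E →L[𝕜] F) {x : E}
    (hf : ContDiffAt 𝕜 2 f (L x)) (u v : E) :
    fderiv 𝕜 (fderiv 𝕜 fun y => f (L y)) x u v = fderiv 𝕜 (fderiv 𝕜 f) (L x) (L u) (L v) := by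
  have hnear : ∀ᶠ y in 𝓝 x, DifferentiableAt 𝕜 f (L y) :=
    L.continuous.continuousAt.eventually
      ((hf.eventually (by simp)).mono fun _ hy => hy.differentiableAt two_ne_zero)
  have hfirst : (fderiv 𝕜 fun y => f (L y)) =ᶠ[𝓝 x] fun y => (fderiv 𝕜 f (L y)).comp L :=
    hnear.mono fun y hy => (hy.hasFDerivAt.comp y L.hasFDerivAt).fderiv
  have hsecond : DifferentiableAt 𝕜 (fderiv 𝕜 f) (L x) :=
    (hf.fderiv_right (m := 1) one_add_one_eq_two.le).differentiableAt one_ne_zero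
  have hcomp : HasFDerivAt (fun y => fderiv 𝕜 f (L y)) ((fderiv 𝕜 (fderiv 𝕜 f) (L x)).comp L) x :=
    hsecond.hasFDerivAt.comp x L.hasFDerivAt
  rw [hfirst.fderiv_eq, (hcomp.clm_comp (hasFDerivAt_const L x)).fderiv]
  simp

variable {ι κ : Type} [Fintype ι] [DecidableEq ι] [Fintype κ] [DecidableEq κ]

theorem hessM_apply {f : (ι → ℝ) → ℝ} {x : ι → ℝ} (hf : ContDiffAt ℝ 2 f x) (i j : ι) :
    hessM f x i j = fderiv ℝ (fderiv ℝ f) x (Pi.single i 1) (Pi.single j 1) := by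
  have hd : DifferentiableAt ℝ (fderiv ℝ f) x :=
    (hf.fderiv_right (m := 1) one_add_one_eq_two.le).differentiableAt one_ne_zero
  simp [hessM, fderiv_clm_apply hd (differentiableAt_const _)]

theorem hessM_eq_toMatrix₂' {f : (ι → ℝ) → ℝ} {x : ι → ℝ} (hf : ContDiffAt ℝ 2 f x) :
    hessM f x = LinearMap.toMatrix₂' ℝ (fderiv ℝ (fderiv ℝ f) x).toLinearMap₁₂ := by
  ext i j
  rw [hessM_apply hf, LinearMap.toMatrix₂'_apply,
    ContinuousLinearMap.toLinearMap₁₂_apply_apply_apply]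

theorem hessM_isSymm {f : (ι → ℝ) → ℝ} {x : ι → ℝ} (hf : ContDiffAt ℝ 2 f x) :
    (hessM f x).IsSymm := by
  ext i j
  rw [transpose_apply, hessM_apply hf, hessM_apply hf]
  exact (hf.isSymmSndFDerivAt (by simp)).eq _ _

theorem hessM_comp_mulVec {f : (ι → ℝ) → ℝ} (S : Matrix ι κ ℝ) {x : κ → ℝ}
    (hf : ContDiffAt ℝ 2 f (S *ᵥ x)) :
    hessM (fun y => f (S *ᵥ y)) x = Sᵀ * hessM f (S *ᵥ x) * S := by
  let L : (κ → ℝ) →L[ℝ] (ι → ℝ) := S.mulVecLin.toContinuousLinearMap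
  have hfL : ContDiffAt ℝ 2 (fun y => f (S *ᵥ y)) x := hf.comp x L.contDiff.contDiffAt
  have hD : (fderiv ℝ (fderiv ℝ fun y => f (S *ᵥ y)) x).toLinearMap₁₂ =
      (fderiv ℝ (fderiv ℝ f) (S *ᵥ x)).toLinearMap₁₂.compl₁₂ (toLin' S) (toLin' S) :=
    LinearMap.ext₂ (fderiv_fderiv_comp_continuousLinearMap L hf)
  rw [hessM_eq_toMatrix₂' hfL, hessM_eq_toMatrix₂' hf, hD, LinearMap.toMatrix₂'_compl₁₂,
    LinearMap.toMatrix'_toLin']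

end Hessian

theorem hasDerivAt_matrix_mul_apply {𝕜 l m n : Type*} [NontriviallyNormedField 𝕜] [Fintype m]
    {U : 𝕜 → Matrix l m 𝕜} {V : 𝕜 → Matrix m n 𝕜} {U' : Matrix l m 𝕜} {V' : Matrix m n 𝕜} {s : 𝕜}
    (hU : ∀ i j, HasDerivAt (fun u => U u i j) (U' i j) s)
    (hV : ∀ j k, HasDerivAt (fun u => V u j k) (V' j k) s) (i : l) (k : n) :
    HasDerivAt (fun u => (U u * V u) i k) ((U' * V s + U s * V') i k) s := by
  simp only [mul_apply, Matrix.add_apply, ← Finset.sum_add_distrib]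
  exact HasDerivAt.fun_sum fun j _ => (hU i j).fun_mul (hV j k)

theorem hasDerivAt_const_matrix_mul_apply {𝕜 l m n : Type*} [NontriviallyNormedField 𝕜] [Fintype m]
    (C : Matrix l m 𝕜) {V : 𝕜 → Matrix m n 𝕜} {V' : Matrix m n 𝕜} {s : 𝕜}
    (hV : ∀ j k, HasDerivAt (fun u => V u j k) (V' j k) s) (i : l) (k : n) :
    HasDerivAt (fun u => (C * V u) i k) ((C * V') i k) s := by
  simpa using hasDerivAt_matrix_mul_apply (U' := 0) (fun i j => hasDerivAt_const s (C i j)) hV i k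

section Antisymplectic

variable {ι R : Type*} [Fintype ι] [DecidableEq ι] [CommRing R] {J S : Matrix ι ι R}

theorem isUnit_of_antisymplectic (hJ : IsUnit J) (hS : S * J * Sᵀ = -J) : IsUnit S :=
  isUnit_of_mul_isUnit_left (y := J * Sᵀ) (by rw [← mul_assoc, hS]; exact hJ.neg)

theorem antisymplectic_of_orthogonal (hanti : S * J = -(J * S)) (horth : Sᵀ * S = 1) :
    S * J * Sᵀ = -J := by
  rw [hanti, Matrix.neg_mul, Matrix.mul_assoc, mul_eq_one_comm.mp horth, Matrix.mul_one]

theorem inv_mul_of_antisymplectic (hJ : IsUnit J) (hS : S * J * Sᵀ = -J) :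
    S⁻¹ * J = -(J * Sᵀ) := by
  have hdet := (isUnit_iff_isUnit_det S).mp (isUnit_of_antisymplectic hJ hS)
  calc S⁻¹ * J = -(S⁻¹ * (S * J * Sᵀ)) := by rw [hS, mul_neg, neg_neg]
    _ = -(J * Sᵀ) := by rw [mul_assoc S, nonsing_inv_mul_cancel_left S _ hdet]

end Antisymplectic

/-- `U` is a (matrix-valued) solution of the linear Hamiltonian system `U' = J H(s) U`. The
derivative is taken entrywise, which avoids choosing a norm on matrices, and `U` may be rectangular,
each of its columns being a solution. -/
def IsHamiltonianSolution {ι κ : Type*} [Fintype ι] (J : Matrix ι ι ℝ) (H : ℝ → Matrix ι ι ℝ)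
    (U : ℝ → Matrix ι κ ℝ) : Prop :=
  ∀ s i k, HasDerivAt (fun u => U u i k) ((J * H s * U s) i k) s

namespace IsHamiltonianSolution

variable {ι κ μ : Type*} [Fintype ι] [DecidableEq ι] {J S : Matrix ι ι ℝ} {H : ℝ → Matrix ι ι ℝ}
  {U : ℝ → Matrix ι κ ℝ} {V : ℝ → Matrix ι μ ℝ} {X : ℝ → Matrix ι ι ℝ} {τ : ℝ}

theorem wronskian_eq (hJ : Jᵀ = -J) (hJu : IsUnit J) (hH : ∀ s, (H s).IsSymm)
    (hU : IsHamiltonianSolution J H U) (hV : IsHamiltonianSolution J H V) (s t : ℝ) :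
    (U s)ᵀ * (J⁻¹ * V s) = (U t)ᵀ * (J⁻¹ * V t) := by
  have hdet := (isUnit_iff_isUnit_det J).mp hJu
  have hcancel (r : ℝ) :
      (J * H r * U r)ᵀ * (J⁻¹ * V r) + (U r)ᵀ * (J⁻¹ * (J * H r * V r)) = 0 := by
    have hleft : (J * H r * U r)ᵀ * (J⁻¹ * V r) = -((U r)ᵀ * (H r * V r)) := by
      simp only [transpose_mul, hJ, (hH r).eq, Matrix.mul_assoc, Matrix.neg_mul, Matrix.mul_neg,
        mul_nonsing_inv_cancel_left J _ hdet]
    rw [hleft, Matrix.mul_assoc J, nonsing_inv_mul_cancel_left J _ hdet, neg_add_cancel]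
  ext i k
  have hderiv (r : ℝ) : HasDerivAt (fun u => ((U u)ᵀ * (J⁻¹ * V u)) i k) 0 r := by
    have h := hasDerivAt_matrix_mul_apply (U := fun u => (U u)ᵀ) (U' := (J * H r * U r)ᵀ)
      (fun a b => hU r b a) (hasDerivAt_const_matrix_mul_apply J⁻¹ (hV r)) i k
    rwa [hcancel] at h
  exact is_const_of_deriv_eq_zero (fun r => (hderiv r).differentiableAt)
    (fun r => (hderiv r).deriv) s t

theorem transpose_mul_inv_mul_self (hJ : Jᵀ = -J) (hJu : IsUnit J) (hH : ∀ s, (H s).IsSymm)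
    (hX : IsHamiltonianSolution J H X) (hX0 : X 0 = 1) (s : ℝ) :
    (X s)ᵀ * J⁻¹ * X s = J⁻¹ := by
  simpa [hX0, Matrix.mul_assoc] using wronskian_eq hJ hJu hH hX hX s 0

theorem isUnit (hJ : Jᵀ = -J) (hJu : IsUnit J) (hH : ∀ s, (H s).IsSymm)
    (hX : IsHamiltonianSolution J H X) (hX0 : X 0 = 1) (s : ℝ) : IsUnit (X s) := by
  have hprod : IsUnit ((X s)ᵀ * J⁻¹ * X s) := by
    rw [transpose_mul_inv_mul_self hJ hJu hH hX hX0]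
    exact isUnit_nonsing_inv_iff.mpr hJu
  exact isUnit_of_mul_isUnit_right hprod

theorem eq_mul_apply_zero (hJ : Jᵀ = -J) (hJu : IsUnit J) (hH : ∀ s, (H s).IsSymm)
    (hX : IsHamiltonianSolution J H X) (hX0 : X 0 = 1) (hV : IsHamiltonianSolution J H V)
    (s : ℝ) : V s = X s * V 0 := by
  have hunit : IsUnit ((X s)ᵀ * J⁻¹) :=
    ((X s).isUnit_transpose.mpr (hX.isUnit hJ hJu hH hX0 s)).mul (isUnit_nonsing_inv_iff.mpr hJu)
  have hwronskian : (X s)ᵀ * J⁻¹ * V s = (X s)ᵀ * J⁻¹ * (X s * V 0) :=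
    calc (X s)ᵀ * J⁻¹ * V s = J⁻¹ * V 0 := by
          simpa [hX0, Matrix.mul_assoc] using wronskian_eq hJ hJu hH hX hV s 0
      _ = (X s)ᵀ * J⁻¹ * (X s * V 0) := by
          rw [← Matrix.mul_assoc, transpose_mul_inv_mul_self hJ hJu hH hX hX0]
  let _ := hunit.invertible
  exact (Matrix.mul_right_inj_of_invertible _).mp hwronskian

theorem inv_mul_comp_neg_add (hJu : IsUnit J) (hS : S * J * Sᵀ = -J)
    (hH : ∀ s, Sᵀ * H (-s + τ) * S = H s) (hU : IsHamiltonianSolution J H U) :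
    IsHamiltonianSolution J H fun s => S⁻¹ * U (-s + τ) := by
  intro s
  have hdet := (isUnit_iff_isUnit_det S).mp (isUnit_of_antisymplectic hJu hS)
  have hreverse (i : ι) (k : κ) : HasDerivAt (fun u => U (-u + τ) i k)
      ((-(J * H (-s + τ) * U (-s + τ))) i k) s := by
    have htime : HasDerivAt (fun u : ℝ => -u + τ) (-1) s := (hasDerivAt_id s).neg.add_const τ
    simpa [Function.comp_def] using (hU (-s + τ) i k).comp s htime
  have hfield : S⁻¹ * -(J * H (-s + τ) * U (-s + τ)) = J * H s * (S⁻¹ * U (-s + τ)) :=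
    calc S⁻¹ * -(J * H (-s + τ) * U (-s + τ))
        = -(S⁻¹ * J) * (H (-s + τ) * U (-s + τ)) := by
          simp only [Matrix.mul_neg, Matrix.neg_mul, Matrix.mul_assoc]
      _ = J * Sᵀ * (H (-s + τ) * U (-s + τ)) := by
          rw [inv_mul_of_antisymplectic hJu hS, neg_neg]
      _ = J * H s * (S⁻¹ * U (-s + τ)) := by
          simp only [← hH s, Matrix.mul_assoc, mul_nonsing_inv_cancel_left S _ hdet]
  rw [← hfield]
  exact hasDerivAt_const_matrix_mul_apply S⁻¹ hreverse

theorem apply_eq_of_time_reversing (hJ : Jᵀ = -J) (hJu : IsUnit J) (hHsymm : ∀ s, (H s).IsSymm)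
    (hS : S * J * Sᵀ = -J) (hH : ∀ s, Sᵀ * H (-s + τ) * S = H s)
    (hX : IsHamiltonianSolution J H X) (hX0 : X 0 = 1) :
    X τ = S * (X (τ / 2))⁻¹ * S⁻¹ * X (τ / 2) := by
  have hSdet := (isUnit_iff_isUnit_det S).mp (isUnit_of_antisymplectic hJu hS)
  have hXdet := (isUnit_iff_isUnit_det _).mp (hX.isUnit hJ hJu hHsymm hX0 (τ / 2))
  have hmid : S⁻¹ * X (τ / 2) = X (τ / 2) * (S⁻¹ * X τ) := by
    simpa [neg_add_eq_sub, sub_half] using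
      eq_mul_apply_zero hJ hJu hHsymm hX hX0 (inv_mul_comp_neg_add hJu hS hH hX) (τ / 2)
  simp only [Matrix.mul_assoc, hmid, nonsing_inv_mul_cancel_left _ _ hXdet,
    mul_nonsing_inv_cancel_left S _ hSdet]

end IsHamiltonianSolution

theorem stdJ_eq_neg_J (n : ℕ) : stdJ n = -J (Fin n) ℝ := by
  simp [stdJ, J, fromBlocks_neg]

theorem stdJ_transpose (n : ℕ) : (stdJ n)ᵀ = -stdJ n := by
  rw [stdJ_eq_neg_J, transpose_neg, J_transpose]

theorem isUnit_stdJ (n : ℕ) : IsUnit (stdJ n) := by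
  rw [stdJ_eq_neg_J]
  exact ((isUnit_iff_isUnit_det _).mpr (isUnit_det_J (Fin n) ℝ)).neg

theorem roberts_time_reversing_half_general {ι : Type} [Fintype ι] [DecidableEq ι]
    {J S : Matrix ι ι ℝ} {Γ : (ι → ℝ) → ℝ} {γ : ℝ → ι → ℝ} {τ : ℝ} {X : ℝ → Matrix ι ι ℝ}
    (hJ : Jᵀ = -J) (hJu : IsUnit J) (hΓ : ∀ s, ContDiffAt ℝ 2 Γ (γ s))
    (hΓS : ∀ x, Γ (S *ᵥ x) = Γ x) (hS : S * J * Sᵀ = -J) (hγ : ∀ s, γ (-s + τ) = S *ᵥ γ s)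
    (hX0 : X 0 = 1) (hX : IsHamiltonianSolution J (fun s => hessM Γ (γ s)) X) :
    X τ = S * (X (τ / 2))⁻¹ * S⁻¹ * X (τ / 2) := by
  have hhess (s : ℝ) : Sᵀ * hessM Γ (γ (-s + τ)) * S = hessM Γ (γ s) := by
    have hΓ' : ContDiffAt ℝ 2 Γ (S *ᵥ γ s) := hγ s ▸ hΓ (-s + τ)
    rw [hγ, ← hessM_comp_mulVec S hΓ', funext hΓS]
  exact hX.apply_eq_of_time_reversing hJ hJu (fun s => hessM_isSymm (hΓ s)) hS hhess hX0

/-- Roberts' Corollary 2.5: under the hypotheses of the time-reversing symmetry lemma,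
the fundamental matrix solution satisfies `X(T/N) = S A⁻¹ Sᵀ A` with `A = X(T/(2N))`. -/
theorem roberts_time_reversing_half (n N : ℕ) (hn : 1 ≤ n) (hN : 1 ≤ N) (T : ℝ) (hT : 0 < T)
    (Γ : ((Fin n ⊕ Fin n) → ℝ) → ℝ) (hΓ : ContDiff ℝ 2 Γ)
    (γ : ℝ → (Fin n ⊕ Fin n) → ℝ)
    (hsol : ∀ s : ℝ, HasDerivAt γ ((stdJ n).mulVec (gradV Γ (γ s))) s)
    (hper : ∀ s : ℝ, γ (s + T) = γ s)
    (S : Matrix (Fin n ⊕ Fin n) (Fin n ⊕ Fin n) ℝ)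
    (hsym : ∀ s : ℝ, γ (-s + T / N) = S.mulVec (γ s))
    (hSinv : ∀ x, Γ (S.mulVec x) = Γ x)
    (hSJ : S * stdJ n = -(stdJ n * S))
    (horth : Sᵀ * S = 1)
    (X : ℝ → Matrix (Fin n ⊕ Fin n) (Fin n ⊕ Fin n) ℝ)
    (hX0 : X 0 = 1)
    (hX : ∀ (s : ℝ) (i j : Fin n ⊕ Fin n),
      HasDerivAt (fun u => X u i j) ((stdJ n * hessM Γ (γ s) * X s) i j) s) :
    X (T / N) = S * (X (T / (2 * N)))⁻¹ * Sᵀ * X (T / (2 * N)) := by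
  have hhalf : T / (2 * N) = T / N / 2 := by ring
  rw [hhalf, ← inv_eq_left_inv horth]
  exact roberts_time_reversing_half_general (stdJ_transpose n) (isUnit_stdJ n)
    (fun _ => hΓ.contDiffAt) hSinv (antisymplectic_of_orthogonal hSJ horth) hsym hX0 hX
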